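/- Assume αχ(M) ≤ 0. If r ∈ Ω and r̂ ∈ Ω are both constant α-curvature metrics, i.e. there are constants c and ĉ with K_i(r) = c·r_i^α and K_i(r̂) = ĉ·r̂_i^α for all i, then r̂ = λ r for some λ > 0; that is, the constant α-curvature inversive distance circle packing metric is unique up to scaling. -/

import Mathlib

/-!
Write `d i = log (rh i / r i)` and join the two metrics by the curve of radii
`r i * exp (d i * t)`, `0 ≤ t ≤ 1`. Two estimates of `Σ dᵢ (K̂ᵢ - Kᵢ)` with opposite signs force
`d` to be constant.

*Upper bound.* Gauss–Bonnet (`gauss_bonnet`) determines `c` and `ĉ` as `2πχ / Σ rᵢ^α` and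
`2πχ / Σ r̂ᵢ^α`. Hence `Σ dᵢ (K̂ᵢ - Kᵢ)` is `2πχ` times the difference of two means of `d`, whose
weights are proportional to `rᵢ^α e^{α dᵢ}` and `rᵢ^α`; Chebyshev's sum inequality (`chebyshev`)
gives this difference the sign of `α`, so `αχ ≤ 0` makes the product nonpositive.

*Lower bound.* In one face let `f t = Σ dᵢ θᵢ(t)`, the sum over its three vertices. The curve may
leave `Ω`, but the angles extend continuously by `π, 0, 0` to triples of lengths violating the
triangle inequalities, and there `f` takes one of the values `π dᵢ` (`degenerate`). At a
nondegenerate triangle `f' < 0` unless `d` is constant on the face (`form_neg`): `f'` is a negative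
multiple of `Σ wₖ (dᵢ - dⱼ)²`, the second symmetric function of the weights is a positive multiple
of Heron's polynomial, and the two weights on the edges at the opposite vertex of a longest side
have positive sum. A continuous function with negative derivative off a finite set of values is
nonincreasing (`antitone_of_finite`), so `f 1 < f 0` (`triangle_strict`). Summing over the faces
gives `Σ dᵢ (K̂ᵢ - Kᵢ) ≥ 0`, with equality only if `d` is constant on every face, hence constant
because the 1-skeleton is connected (`const_of_faces`).
-/

open Real Filter Topology

namespace IDCP

variable {N : ℕ}

/-- The set of edges: 2-element subsets of vertices contained in some face. -/
def edges (Fc : Finset (Finset (Fin N))) : Finset (Finset (Fin N)) :=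
  Fc.biUnion fun f => f.powersetCard 2

/-- `Fc` is the face set of a triangulation of a closed connected surface:
every face has 3 vertices, every edge lies in exactly two faces, and the
1-skeleton is connected. -/
structure IsTriangulation (Fc : Finset (Finset (Fin N))) : Prop where
  card3 : ∀ f ∈ Fc, f.card = 3
  edge2 : ∀ e ∈ edges Fc, (Fc.filter fun f => e ⊆ f).card = 2
  conn : (SimpleGraph.fromRel fun i j => ({i, j} : Finset (Fin N)) ∈ edges Fc).Connected

/-- Euler characteristic χ(M) = N − |E| + |F|. -/
def chi (Fc : Finset (Finset (Fin N))) : ℤ :=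
  (N : ℤ) - ((edges Fc).card : ℤ) + (Fc.card : ℤ)

/-- Edge length l_ij = √(r_i² + r_j² + 2 r_i r_j I_{ij}). -/
noncomputable def len (I : Finset (Fin N) → ℝ) (r : Fin N → ℝ) (i j : Fin N) : ℝ :=
  Real.sqrt (r i ^ 2 + r j ^ 2 + 2 * r i * r j * I {i, j})

/-- The cosine of the inner angle at `i` in triangle `{i,j,k}`. -/
noncomputable def cosAng (I : Finset (Fin N) → ℝ) (r : Fin N → ℝ) (i j k : Fin N) : ℝ :=
  (len I r i j ^ 2 + len I r i k ^ 2 - len I r j k ^ 2) / (2 * len I r i j * len I r i k)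

/-- The auxiliary function Λ. -/
noncomputable def Lam (x : ℝ) : ℝ :=
  if x ≤ -1 then π else if x ≤ 1 then Real.arccos x else 0

/-- Discrete Gaussian curvature K_i = 2π − Σ_{{i,j,k}∈F} θ_i^{jk}.  Every face
containing `i` appears exactly twice (once for each ordering of `j,k`), whence
the factor 1/2. -/
noncomputable def K (Fc : Finset (Finset (Fin N))) (I : Finset (Fin N) → ℝ)
    (r : Fin N → ℝ) (i : Fin N) : ℝ :=
  2 * π - (1 / 2) * ∑ j, ∑ k,
    (if ({i, j, k} : Finset (Fin N)) ∈ Fc then Real.arccos (cosAng I r i j k) else 0)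

/-- Extended curvature K̃_i = 2π − Σ θ̃_i^{jk}, using the generalized angles Λ. -/
noncomputable def Kt (Fc : Finset (Finset (Fin N))) (I : Finset (Fin N) → ℝ)
    (r : Fin N → ℝ) (i : Fin N) : ℝ :=
  2 * π - (1 / 2) * ∑ j, ∑ k,
    (if ({i, j, k} : Finset (Fin N)) ∈ Fc then Lam (cosAng I r i j k) else 0)

/-- The set Ω of inversive distance circle packing metrics. -/
def Omega (Fc : Finset (Finset (Fin N))) (I : Finset (Fin N) → ℝ) : Set (Fin N → ℝ) :=
  {r | (∀ i, 0 < r i) ∧ ∀ i j k : Fin N, ({i, j, k} : Finset (Fin N)) ∈ Fc →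
    len I r j k < len I r i j + len I r i k}

/-- s_α = 2πχ(M)/‖r‖_α^α. -/
noncomputable def sA (Fc : Finset (Finset (Fin N))) (α : ℝ) (r : Fin N → ℝ) : ℝ :=
  2 * π * (chi Fc : ℝ) / ∑ j, r j ^ α

/-- Back from u-coordinates: r_i = e^{u_i}. -/
noncomputable def rOf (u : Fin N → ℝ) : Fin N → ℝ := fun i => Real.exp (u i)

/-- ln Ω, the image of Ω under the coordinate change r ↦ u, u_i = ln r_i. -/
def lnOmega (Fc : Finset (Finset (Fin N))) (I : Finset (Fin N) → ℝ) : Set (Fin N → ℝ) :=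
  {u | rOf u ∈ Omega Fc I}

/-- `u` solves the α-flow du_i/dt = s_α r_i^α − K_i on the time set `D`,
staying in ln Ω. -/
def IsFlowSol (Fc : Finset (Finset (Fin N))) (I : Finset (Fin N) → ℝ) (α : ℝ)
    (D : Set ℝ) (u : ℝ → Fin N → ℝ) : Prop :=
  ∀ t ∈ D, rOf (u t) ∈ Omega Fc I ∧
    ∀ i, HasDerivWithinAt (fun s => u s i)
      (sA Fc α (rOf (u t)) * rOf (u t) i ^ α - K Fc I (rOf (u t)) i) D t

/-- `u` solves the extended α-flow du_i/dt = s_α r_i^α − K̃_i on the time set `D`. -/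
def IsExtFlowSol (Fc : Finset (Finset (Fin N))) (I : Finset (Fin N) → ℝ) (α : ℝ)
    (D : Set ℝ) (u : ℝ → Fin N → ℝ) : Prop :=
  ∀ t ∈ D, ∀ i, HasDerivWithinAt (fun s => u s i)
      (sA Fc α (rOf (u t)) * rOf (u t) i ^ α - Kt Fc I (rOf (u t)) i) D t

/-- Lk(A): pairs (e,v) with both endpoints of e outside A, v ∈ A, and e,v spanning a face. -/
def Lk (Fc : Finset (Finset (Fin N))) (A : Finset (Fin N)) :
    Finset (Finset (Fin N) × Fin N) :=
  ((edges Fc) ×ˢ (Finset.univ : Finset (Fin N))).filter fun p =>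
    (∀ x ∈ p.1, x ∉ A) ∧ p.2 ∈ A ∧ insert p.2 p.1 ∈ Fc

/-- Euler characteristic χ(F_A) of the subcomplex spanned by A. -/
def chiSub (Fc : Finset (Finset (Fin N))) (A : Finset (Fin N)) : ℤ :=
  (A.card : ℤ) - (((edges Fc).filter (fun e => e ⊆ A)).card : ℤ)
    + ((Fc.filter (fun f => f ⊆ A)).card : ℤ)

/-- The lower bound −Σ_{(e,v)∈Lk(A)}(π − Λ(I_e)) + 2πχ(F_A) defining Y_A. -/
noncomputable def Ybound (Fc : Finset (Finset (Fin N))) (I : Finset (Fin N) → ℝ)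
    (A : Finset (Fin N)) : ℝ :=
  -(∑ p ∈ Lk Fc A, (π - Lam (I p.1))) + 2 * π * (chiSub Fc A : ℝ)

/-- x ∈ Y. -/
noncomputable def memY (Fc : Finset (Finset (Fin N))) (I : Finset (Fin N) → ℝ)
    (x : Fin N → ℝ) : Prop :=
  (∑ i, x i) = 2 * π * (chi Fc : ℝ) ∧
    ∀ A : Finset (Fin N), A.Nonempty → A ≠ Finset.univ → Ybound Fc I A < ∑ i ∈ A, x i

/-- x ∈ Ȳ. -/
noncomputable def memYbar (Fc : Finset (Finset (Fin N))) (I : Finset (Fin N) → ℝ)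
    (x : Fin N → ℝ) : Prop :=
  (∑ i, x i) = 2 * π * (chi Fc : ℝ) ∧
    ∀ A : Finset (Fin N), A.Nonempty → A ≠ Finset.univ → Ybound Fc I A ≤ ∑ i ∈ A, x i

/-! ### Triangles and their angles -/

/-- The squared side length `x² + y² + 2xyI` between circles of radii `x`, `y`. -/
noncomputable def sq (x y J : ℝ) : ℝ := x ^ 2 + y ^ 2 + 2 * x * y * J

/-- The angle opposite the side of squared length `A` in a triangle whose squared side lengths
are `A`, `B`, `C`.  `Real.arccos` clamps its argument to `[-1, 1]`, so this is already the continuous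
extension by `π`, `0`, `0` to degenerate triangles. -/
noncomputable def ang (A B C : ℝ) : ℝ := Real.arccos ((B + C - A) / (2 * √B * √C))

/-- Heron's polynomial, sixteen times the squared area in terms of squared side lengths. -/
def heron (A B C : ℝ) : ℝ := 2 * A * B + 2 * B * C + 2 * C * A - A ^ 2 - B ^ 2 - C ^ 2

lemma sq_pos {x y J : ℝ} (hx : 0 < x) (hy : 0 < y) (hJ : 0 ≤ J) : 0 < sq x y J := by
  unfold sq; positivity

lemma heron_factor (a b c : ℝ) :
    heron (a ^ 2) (b ^ 2) (c ^ 2) = (a + b + c) * (b + c - a) * (c + a - b) * (a + b - c) := by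
  unfold heron; ring

lemma heron_pos {A B C : ℝ} (hA : 0 < A) (hB : 0 < B) (hC : 0 < C)
    (h1 : √A < √B + √C) (h2 : √B < √C + √A) (h3 : √C < √A + √B) : 0 < heron A B C := by
  have := heron_factor √A √B √C
  rw [Real.sq_sqrt hA.le, Real.sq_sqrt hB.le, Real.sq_sqrt hC.le] at this
  rw [this]
  have := Real.sqrt_pos.2 hA
  have := Real.sqrt_pos.2 hB
  have := Real.sqrt_pos.2 hC
  have h1' : 0 < √B + √C - √A := by linarith
  have h2' : 0 < √C + √A - √B := by linarith
  have h3' : 0 < √A + √B - √C := by linarith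
  positivity

lemma ang_of_ge {a b c : ℝ} (hb : 0 < b) (hc : 0 < c) (h : b + c ≤ a) :
    ang (a ^ 2) (b ^ 2) (c ^ 2) = π := by
  unfold ang
  rw [Real.sqrt_sq hb.le, Real.sqrt_sq hc.le, Real.arccos_eq_pi, div_le_iff₀ (by positivity)]
  nlinarith

lemma ang_of_ge' {a b c : ℝ} (ha : 0 < a) (hb : 0 < b) (hc : 0 < c) (h : b + c ≤ a) :
    ang (b ^ 2) (a ^ 2) (c ^ 2) = 0 := by
  unfold ang
  rw [Real.sqrt_sq ha.le, Real.sqrt_sq hc.le, Real.arccos_eq_zero, le_div_iff₀ (by positivity)]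
  nlinarith

lemma ang_comm (A B C : ℝ) : ang A B C = ang A C B := by
  unfold ang; congr 1; ring

/-- When the triangle inequalities fail or are equalities, the extended angles are `π, 0, 0` in
some order, so a weighted angle sum is `π` times one of the weights. -/
lemma degenerate {A B C : ℝ} (hA : 0 < A) (hB : 0 < B) (hC : 0 < C) (h : heron A B C ≤ 0)
    (d1 d2 d3 : ℝ) :
    d1 * ang A C B + d2 * ang B A C + d3 * ang C B A ∈ ({d1 * π, d2 * π, d3 * π} : Set ℝ) := by
  have ha := Real.sqrt_pos.2 hA
  have hb := Real.sqrt_pos.2 hB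
  have hc := Real.sqrt_pos.2 hC
  have key : √B + √C ≤ √A ∨ √C + √A ≤ √B ∨ √A + √B ≤ √C := by
    by_contra! hh
    exact absurd (heron_pos hA hB hC hh.1 hh.2.1 hh.2.2) (not_lt.2 h)
  rw [← Real.sq_sqrt hA.le, ← Real.sq_sqrt hB.le, ← Real.sq_sqrt hC.le]
  generalize √A = a at *
  generalize √B = b at *
  generalize √C = c at *
  rcases key with k | k | k
  · left
    rw [ang_of_ge hc hb (by linarith), ang_of_ge' ha hb hc k, ang_comm, ang_of_ge' ha hc hb (by linarith)]
    ring
  · right; left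
    rw [ang_of_ge ha hc (by linarith), ang_comm, ang_of_ge' hb ha hc (by linarith),
      ang_of_ge' hb hc ha (by linarith)]
    ring
  · right; right
    rw [ang_of_ge hb ha (by linarith), ang_of_ge' hc ha hb (by linarith), ang_comm,
      ang_of_ge' hc hb ha (by linarith)]
    simp

lemma angle_sum {A B C : ℝ} (hA : 0 < A) (hB : 0 < B) (hC : 0 < C)
    (h1 : √A < √B + √C) (h2 : √B < √C + √A) (h3 : √C < √A + √B) :
    ang A C B + ang B A C + ang C B A = π := by
  have hH := heron_pos hA hB hC h1 h2 h3
  have ha := Real.sqrt_pos.2 hA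
  have hb := Real.sqrt_pos.2 hB
  have hc := Real.sqrt_pos.2 hC
  rw [← Real.sq_sqrt hA.le, ← Real.sq_sqrt hB.le, ← Real.sq_sqrt hC.le] at hH ⊢
  generalize √A = a at *
  generalize √B = b at *
  generalize √C = c at *
  unfold ang
  rw [Real.sqrt_sq ha.le, Real.sqrt_sq hb.le, Real.sqrt_sq hc.le]
  set x := (c ^ 2 + b ^ 2 - a ^ 2) / (2 * c * b) with hx
  set y := (a ^ 2 + c ^ 2 - b ^ 2) / (2 * a * c) with hy
  set z := (b ^ 2 + a ^ 2 - c ^ 2) / (2 * b * a) with hz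
  have hx2 : 1 - x ^ 2 = heron (a ^ 2) (b ^ 2) (c ^ 2) / (2 * c * b) ^ 2 := by
    rw [hx]; unfold heron; field_simp; ring
  have hy2 : 1 - y ^ 2 = heron (a ^ 2) (b ^ 2) (c ^ 2) / (2 * a * c) ^ 2 := by
    rw [hy]; unfold heron; field_simp; ring
  have hx1 : -1 ≤ x ∧ x ≤ 1 := by
    apply abs_le.1
    rw [← sq_le_one_iff_abs_le_one]
    have : 0 ≤ 1 - x ^ 2 := by rw [hx2]; positivity
    linarith
  have hy1 : -1 ≤ y ∧ y ≤ 1 := by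
    apply abs_le.1
    rw [← sq_le_one_iff_abs_le_one]
    have : 0 ≤ 1 - y ^ 2 := by rw [hy2]; positivity
    linarith
  have hxy : 0 < x + y := by
    have : x + y = (a + b) * (c + a - b) * (b + c - a) / (2 * a * b * c) := by
      rw [hx, hy]; field_simp; ring
    rw [this]
    have h1' : 0 < c + a - b := by linarith
    have h2' : 0 < b + c - a := by linarith
    positivity
  have hle : Real.arccos x + Real.arccos y ≤ π := by
    have : Real.arccos x ≤ Real.arccos (-y) := Real.arccos_le_arccos (by linarith)
    rw [Real.arccos_neg] at this
    linarith
  have hcos : Real.cos (Real.arccos x + Real.arccos y) = -z := by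
    rw [Real.cos_add, Real.cos_arccos hx1.1 hx1.2, Real.cos_arccos hy1.1 hy1.2,
      Real.sin_arccos, Real.sin_arccos, hx2, hy2, Real.sqrt_div hH.le, Real.sqrt_div hH.le,
      Real.sqrt_sq (by positivity), Real.sqrt_sq (by positivity), div_mul_div_comm,
      div_mul_div_comm, Real.mul_self_sqrt hH.le, hz]
    unfold heron; field_simp; ring
  have := Real.arccos_cos (add_nonneg (Real.arccos_nonneg x) (Real.arccos_nonneg y)) hle
  rw [hcos, Real.arccos_neg] at this
  linarith

/-- First variation of an angle in terms of the squared side lengths. -/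
lemma ang_deriv {A B C : ℝ → ℝ} {A' B' C' t : ℝ} (hA : HasDerivAt A A' t)
    (hB : HasDerivAt B B' t) (hC : HasDerivAt C C' t) (pB : 0 < B t)
    (pC : 0 < C t) (hH : 0 < heron (A t) (B t) (C t)) :
    HasDerivAt (fun s => ang (A s) (B s) (C s))
      ((√(heron (A t) (B t) (C t)))⁻¹ *
        (A' - B' * (A t + B t - C t) / (2 * B t) - C' * (A t + C t - B t) / (2 * C t))) t := by
  have hb := Real.sqrt_pos.2 pB
  have hc := Real.sqrt_pos.2 pC
  have hd := ((hB.add hC).sub hA).div ((((hB.sqrt pB.ne').const_mul 2)).mul (hC.sqrt pC.ne'))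
    (by simp only [Pi.mul_apply]; positivity)
  have eB := Real.sq_sqrt pB.le
  have eC := Real.sq_sqrt pC.le
  have e : 1 - ((B t + C t - A t) / (2 * √(B t) * √(C t))) ^ 2
      = heron (A t) (B t) (C t) / (2 * √(B t) * √(C t)) ^ 2 := by
    rw [eq_div_iff (by positivity), sub_mul, div_pow, div_mul_cancel₀ _ (by positivity), mul_pow,
      mul_pow, eB, eC]
    unfold heron; ring
  have hlt : 0 < 1 - ((B t + C t - A t) / (2 * √(B t) * √(C t))) ^ 2 := by rw [e]; positivity
  have n1 : (B t + C t - A t) / (2 * √(B t) * √(C t)) ≠ -1 := by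
    intro h; rw [h] at hlt; norm_num at hlt
  have n2 : (B t + C t - A t) / (2 * √(B t) * √(C t)) ≠ 1 := by
    intro h; rw [h] at hlt; norm_num at hlt
  have hm := HasDerivAt.comp t (Real.hasDerivAt_arccos n1 n2) hd
  refine hm.congr_deriv ?_
  simp only [Pi.mul_apply, Pi.add_apply, Pi.sub_apply, Pi.div_apply]
  rw [e, Real.sqrt_div hH.le, Real.sqrt_sq (by positivity)]
  have hs := Real.sqrt_pos.2 hH
  generalize √(heron (A t) (B t) (C t)) = s at *
  generalize √(B t) = b at *
  generalize √(C t) = c at *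
  rw [← eB, ← eC]
  field_simp
  ring

/-! ### The Jacobian of the angles -/

/-- The numerator of the weight `w₃` on the edge `12` in the symmetric form of the
derivative of `Σ dᵢ θᵢ`. -/
def wt (r1 r2 r3 I1 I2 I3 : ℝ) : ℝ :=
  r1 * r2 * (r1 * r2 * (1 - I3 ^ 2) + r1 * r3 * (I1 + I2 * I3) + r2 * r3 * (I2 + I1 * I3))

/-- The half-derivative of a squared side length when `rᵢ' = dᵢ rᵢ`. -/
def dsq (x y J d e : ℝ) : ℝ := d * x ^ 2 + e * y ^ 2 + (d + e) * x * y * J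

/-- A weighted triangle form is positive definite on differences when the second elementary
symmetric function of the weights is positive and some two weights have positive sum. -/
lemma form_pos {u v w d1 d2 d3 : ℝ} (h2 : 0 < u * v + v * w + w * u)
    (h : 0 < u + v ∨ 0 < v + w ∨ 0 < w + u) (hd : ¬ (d1 = d2 ∧ d2 = d3)) :
    0 < u * (d2 - d3) ^ 2 + v * (d1 - d3) ^ 2 + w * (d1 - d2) ^ 2 := by
  have huw : 0 < w + u := by
    rcases h with h | h | h
    · have : 0 < (u + v) * (w + u) := by nlinarith [sq_nonneg u]
      exact (pos_iff_pos_of_mul_pos this).1 h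
    · have : 0 < (v + w) * (w + u) := by nlinarith [sq_nonneg w]
      exact (pos_iff_pos_of_mul_pos this).1 h
    · exact h
  -- completing the square in `d1 - d2`, `d3 - d2`
  have key : (w + u) * (u * (d2 - d3) ^ 2 + v * (d1 - d3) ^ 2 + w * (d1 - d2) ^ 2)
      = (u * (d3 - d2) + w * (d1 - d2)) ^ 2 + (u * v + v * w + w * u) * (d1 - d3) ^ 2 := by ring
  by_cases h13 : d1 = d3
  · subst h13
    have h12 : d2 - d1 ≠ 0 := by
      intro h0; apply hd; constructor <;> linarith
    have : u * (d2 - d1) ^ 2 + v * (d1 - d1) ^ 2 + w * (d1 - d2) ^ 2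
      = (w + u) * (d2 - d1) ^ 2 := by ring
    rw [this]; positivity
  · have h13' : d1 - d3 ≠ 0 := sub_ne_zero.2 h13
    have : 0 < (w + u) * (u * (d2 - d3) ^ 2 + v * (d1 - d3) ^ 2 + w * (d1 - d2) ^ 2) := by
      rw [key]; positivity
    exact (pos_iff_pos_of_mul_pos this).1 huw

lemma exists_max (x y z : ℝ) : (x ≤ z ∧ y ≤ z) ∨ (y ≤ x ∧ z ≤ x) ∨ (z ≤ y ∧ x ≤ y) := by
  grind

/-- The Jacobian of the angles with respect to the logarithmic radii is negative definite
transversally to scaling. -/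
lemma form_neg {r1 r2 r3 I1 I2 I3 d1 d2 d3 : ℝ} (h1 : 0 < r1) (h2 : 0 < r2) (h3 : 0 < r3)
    (i1 : 0 ≤ I1) (i2 : 0 ≤ I2) (i3 : 0 ≤ I3) {X1 X2 X3 : ℝ}
    (e1 : X1 = sq r2 r3 I1) (e2 : X2 = sq r1 r3 I2) (e3 : X3 = sq r1 r2 I3)
    {P1 P2 P3 : ℝ} (f1 : P1 = dsq r2 r3 I1 d2 d3) (f2 : P2 = dsq r1 r3 I2 d1 d3)
    (f3 : P3 = dsq r1 r2 I3 d1 d2)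
    (hH : 0 < heron X1 X2 X3) (hd : ¬ (d1 = d2 ∧ d2 = d3)) :
    d1 * (2 * P1 - 2 * P3 * (X1 + X3 - X2) / (2 * X3) - 2 * P2 * (X1 + X2 - X3) / (2 * X2))
    + d2 * (2 * P2 - 2 * P1 * (X2 + X1 - X3) / (2 * X1) - 2 * P3 * (X2 + X3 - X1) / (2 * X3))
    + d3 * (2 * P3 - 2 * P2 * (X3 + X2 - X1) / (2 * X2) - 2 * P1 * (X3 + X1 - X2) / (2 * X1))
     < 0 := by
  have p1 : 0 < X1 := e1 ▸ sq_pos h2 h3 i1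
  have p2 : 0 < X2 := e2 ▸ sq_pos h1 h3 i2
  have p3 : 0 < X3 := e3 ▸ sq_pos h1 h2 i3
  set w1 := wt r2 r3 r1 I2 I3 I1 / X1 with hw1
  set w2 := wt r1 r3 r2 I1 I3 I2 / X2 with hw2
  set w3 := wt r1 r2 r3 I1 I2 I3 / X3 with hw3
  have hform : d1 * (2 * P1 - 2 * P3 * (X1 + X3 - X2) / (2 * X3)
        - 2 * P2 * (X1 + X2 - X3) / (2 * X2))
      + d2 * (2 * P2 - 2 * P1 * (X2 + X1 - X3) / (2 * X1) - 2 * P3 * (X2 + X3 - X1) / (2 * X3))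
      + d3 * (2 * P3 - 2 * P2 * (X3 + X2 - X1) / (2 * X2) - 2 * P1 * (X3 + X1 - X2) / (2 * X1))
      = -2 * (w1 * (d2 - d3) ^ 2 + w2 * (d1 - d3) ^ 2 + w3 * (d1 - d2) ^ 2) := by
    rw [hw1, hw2, hw3]
    field_simp
    rw [e1, e2, e3, f1, f2, f3]
    unfold sq dsq wt
    ring
  -- the second symmetric function is a multiple of the determinant of `(∂Xᵢ/∂uⱼ)`
  have hdet : w1 * w2 + w2 * w3 + w3 * w1 = (r1 * r2 * r3) * heron X1 X2 X3 / 4 *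
      ((r2 + r3 * I1) * (r3 + r1 * I2) * (r1 + r2 * I3)
        + (r3 + r2 * I1) * (r1 + r3 * I2) * (r2 + r1 * I3)) / (X1 * X2 * X3) := by
    rw [hw1, hw2, hw3]
    field_simp
    rw [e1, e2, e3]
    unfold sq wt heron
    ring
  have hs3 : w1 + w2 = ((r3 ^ 2 + r2 * r3 * I1) * (X3 + X1 - X2) * X2
      + (r3 ^ 2 + r1 * r3 * I2) * (X3 + X2 - X1) * X1) / (2 * X1 * X2) := by
    rw [hw1, hw2]
    field_simp
    rw [e1, e2, e3]
    unfold sq wt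
    ring
  have hs1 : w2 + w3 = ((r1 ^ 2 + r1 * r3 * I2) * (X1 + X2 - X3) * X3
      + (r1 ^ 2 + r1 * r2 * I3) * (X1 + X3 - X2) * X2) / (2 * X2 * X3) := by
    rw [hw3, hw2]
    field_simp
    rw [e1, e2, e3]
    unfold sq wt
    ring
  have hs2 : w3 + w1 = ((r2 ^ 2 + r1 * r2 * I3) * (X2 + X3 - X1) * X1
      + (r2 ^ 2 + r2 * r3 * I1) * (X2 + X1 - X3) * X3) / (2 * X3 * X1) := by
    rw [hw3, hw1]
    field_simp
    rw [e1, e2, e3]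
    unfold sq wt
    ring
  rw [hform]
  have := form_pos (u := w1) (v := w2) (w := w3) (d1 := d1) (d2 := d2) (d3 := d3)
    (by rw [hdet]; positivity) ?_ hd
  · linarith
  -- the two angles at the ends of a longest side are acute
  rcases exists_max X1 X2 X3 with m | m | m
  · left
    have q1 : 0 < X3 + X1 - X2 := by linarith
    have q2 : 0 < X3 + X2 - X1 := by linarith
    rw [hs3]; positivity
  · right; left
    have q1 : 0 < X1 + X2 - X3 := by linarith
    have q2 : 0 < X1 + X3 - X2 := by linarith
    rw [hs1]; positivity
  · right; right
    have q1 : 0 < X2 + X3 - X1 := by linarith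
    have q2 : 0 < X2 + X1 - X3 := by linarith
    rw [hs2]; positivity

/-! ### Monotonicity of the angles along a curve of radii -/

lemma eventually_lt_right {f : ℝ → ℝ} {D s : ℝ} (hD : D < 0) (h : HasDerivAt f D s) :
    ∀ᶠ t in 𝓝[>] s, f t < f s := by
  have h1 := (hasDerivAt_iff_tendsto_slope.1 h).eventually (gt_mem_nhds hD)
  have h2 : ∀ᶠ t in 𝓝[>] s, slope f s t < 0 :=
    h1.filter_mono (nhdsWithin_mono _ fun x (hx : s < x) => hx.ne')
  filter_upwards [h2, self_mem_nhdsWithin] with t ht (hst : s < t)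
  rw [slope_def_field, div_lt_iff₀ (sub_pos.2 hst)] at ht
  linarith

/-- A continuous function with negative derivative wherever its value lies outside a finite
set is nonincreasing: at the last crossing of a level outside that set it could not increase. -/
lemma antitone_of_finite {f : ℝ → ℝ} {S : Set ℝ} (hS : S.Finite) (hf : Continuous f)
    (h : ∀ t, f t ∈ S ∨ ∃ D < 0, HasDerivAt f D t) {a b : ℝ} (hab : a ≤ b) : f b ≤ f a := by
  by_contra! hlt
  obtain ⟨y, ⟨hy1, hy2⟩, hyS⟩ := (Set.Ioo_infinite hlt).exists_notMem_finite hS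
  have hK : IsCompact (Set.Icc a b ∩ f ⁻¹' Set.Iic y) :=
    isCompact_Icc.inter_right (isClosed_Iic.preimage hf)
  obtain ⟨s, ⟨⟨⟨hsa, hsb⟩, hsy⟩, hmax⟩⟩ := hK.exists_isGreatest ⟨a, ⟨le_rfl, hab⟩, hy1.le⟩
  simp only [Set.mem_preimage, Set.mem_Iic] at hsy
  have hsb' : s < b := by
    refine lt_of_le_of_ne hsb ?_
    rintro rfl
    linarith
  have hev : ∀ᶠ t in 𝓝[>] s, f t < y := by
    rcases hsy.lt_or_eq with hs | hs
    · exact (hf.continuousAt.eventually (gt_mem_nhds hs)).filter_mono nhdsWithin_le_nhds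
    · rcases h s with h0 | ⟨D, hD, h0⟩
      · exact absurd (hs ▸ h0) hyS
      · rw [← hs]; exact eventually_lt_right hD h0
  obtain ⟨t, ht, ht1, ht2⟩ := (hev.and (Ioc_mem_nhdsGT hsb')).exists
  have := hmax ⟨⟨hsa.trans ht1.le, ht2⟩, ht.le⟩
  linarith

lemma strict_of_finite {f : ℝ → ℝ} {S : Set ℝ} (hS : S.Finite) (hf : Continuous f)
    (h : ∀ t, f t ∈ S ∨ ∃ D < 0, HasDerivAt f D t) (h0 : ∃ D < 0, HasDerivAt f D 0) :
    f 1 < f 0 := by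
  obtain ⟨D, hD, h0⟩ := h0
  obtain ⟨t, ht, ht1, ht2⟩ :=
    ((eventually_lt_right hD h0).and (Ioc_mem_nhdsGT (zero_lt_one' ℝ))).exists
  exact (antitone_of_finite hS hf h ht2).trans_lt ht

lemma heron_swap (A B C : ℝ) : heron A C B = heron A B C := by unfold heron; ring

lemma heron_rot (A B C : ℝ) : heron B A C = heron A B C := by unfold heron; ring

lemma sq_deriv (x y J d e t : ℝ) :
    HasDerivAt (fun t => sq (x * Real.exp (d * t)) (y * Real.exp (e * t)) J)
      (2 * dsq (x * Real.exp (d * t)) (y * Real.exp (e * t)) J d e) t := by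
  have hx : ∀ x d : ℝ, HasDerivAt (fun t => x * Real.exp (d * t)) (d * (x * Real.exp (d * t))) t := by
    intro x d
    have := ((hasDerivAt_id t).const_mul d).exp.const_mul x
    refine this.congr_deriv ?_
    simp; ring
  have h := (((hx x d).pow 2).add ((hx y e).pow 2)).add
    ((((hx x d).const_mul 2).mul (hx y e)).mul_const J)
  refine h.congr_deriv ?_
  unfold dsq
  simp only [Nat.cast_ofNat, Nat.reduceSub, pow_one]
  ring

lemma ang_continuous {A B C : ℝ → ℝ} (hA : Continuous A) (hB : Continuous B) (hC : Continuous C)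
    (pB : ∀ t, 0 < B t) (pC : ∀ t, 0 < C t) : Continuous fun t => ang (A t) (B t) (C t) := by
  unfold ang
  refine Real.continuous_arccos.comp (Continuous.div (by fun_prop) (by fun_prop) fun t => ?_)
  have := Real.sqrt_pos.2 (pB t)
  have := Real.sqrt_pos.2 (pC t)
  positivity

/-- Monotonicity of the angles of one triangle: between a nondegenerate triangle and any other,
possibly degenerate, one with the same inversive distances, `Σ dᵢ (θ̂ᵢ - θᵢ) < 0` unless the
radii are rescaled uniformly. -/
lemma triangle_strict {r1 r2 r3 I1 I2 I3 d1 d2 d3 : ℝ} (h1 : 0 < r1) (h2 : 0 < r2) (h3 : 0 < r3)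
    (i1 : 0 ≤ I1) (i2 : 0 ≤ I2) (i3 : 0 ≤ I3)
    (hH : 0 < heron (sq r2 r3 I1) (sq r1 r3 I2) (sq r1 r2 I3)) {s1 s2 s3 : ℝ}
    (e1 : s1 = r1 * Real.exp d1) (e2 : s2 = r2 * Real.exp d2) (e3 : s3 = r3 * Real.exp d3)
    (hd : ¬ (d1 = d2 ∧ d2 = d3)) :
    d1 * ang (sq s2 s3 I1) (sq s1 s2 I3) (sq s1 s3 I2)
      + d2 * ang (sq s1 s3 I2) (sq s2 s3 I1) (sq s1 s2 I3)
      + d3 * ang (sq s1 s2 I3) (sq s1 s3 I2) (sq s2 s3 I1)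
    < d1 * ang (sq r2 r3 I1) (sq r1 r2 I3) (sq r1 r3 I2)
      + d2 * ang (sq r1 r3 I2) (sq r2 r3 I1) (sq r1 r2 I3)
      + d3 * ang (sq r1 r2 I3) (sq r1 r3 I2) (sq r2 r3 I1) := by
  set X1 : ℝ → ℝ := fun t => sq (r2 * Real.exp (d2 * t)) (r3 * Real.exp (d3 * t)) I1 with hX1
  set X2 : ℝ → ℝ := fun t => sq (r1 * Real.exp (d1 * t)) (r3 * Real.exp (d3 * t)) I2 with hX2
  set X3 : ℝ → ℝ := fun t => sq (r1 * Real.exp (d1 * t)) (r2 * Real.exp (d2 * t)) I3 with hX3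
  have p1 : ∀ t, 0 < X1 t := fun t => sq_pos (by positivity) (by positivity) i1
  have p2 : ∀ t, 0 < X2 t := fun t => sq_pos (by positivity) (by positivity) i2
  have p3 : ∀ t, 0 < X3 t := fun t => sq_pos (by positivity) (by positivity) i3
  have D1 := fun t => sq_deriv r2 r3 I1 d2 d3 t
  have D2 := fun t => sq_deriv r1 r3 I2 d1 d3 t
  have D3 := fun t => sq_deriv r1 r2 I3 d1 d2 t
  have c1 : Continuous X1 := continuous_iff_continuousAt.2 fun t => (D1 t).continuousAt
  have c2 : Continuous X2 := continuous_iff_continuousAt.2 fun t => (D2 t).continuousAt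
  have c3 : Continuous X3 := continuous_iff_continuousAt.2 fun t => (D3 t).continuousAt
  set f : ℝ → ℝ := fun t => d1 * ang (X1 t) (X3 t) (X2 t) + d2 * ang (X2 t) (X1 t) (X3 t)
    + d3 * ang (X3 t) (X2 t) (X1 t) with hf
  have hder : ∀ t, 0 < heron (X1 t) (X2 t) (X3 t) → ∃ D < 0, HasDerivAt f D t := by
    intro t ht
    have a1 := (ang_deriv (D1 t) (D3 t) (D2 t) (p3 t) (p2 t)
      (by rw [heron_swap]; exact ht)).const_mul d1
    have a2 := (ang_deriv (D2 t) (D1 t) (D3 t) (p1 t) (p3 t)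
      (by rw [heron_rot]; exact ht)).const_mul d2
    have a3 := (ang_deriv (D3 t) (D2 t) (D1 t) (p2 t) (p1 t)
      (by rw [heron_rot, heron_swap, heron_rot]; exact ht)).const_mul d3
    have q := form_neg (d1 := d1) (d2 := d2) (d3 := d3) (X1 := X1 t) (X2 := X2 t) (X3 := X3 t)
      (mul_pos h1 (Real.exp_pos (d1 * t))) (mul_pos h2 (Real.exp_pos (d2 * t)))
      (mul_pos h3 (Real.exp_pos (d3 * t))) i1 i2 i3 rfl rfl rfl rfl rfl rfl ht hd
    refine ⟨_, ?_, (a1.add a2).add a3⟩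
    have w1 : heron (X1 t) (X3 t) (X2 t) = heron (X1 t) (X2 t) (X3 t) := heron_swap ..
    have w2 : heron (X2 t) (X1 t) (X3 t) = heron (X1 t) (X2 t) (X3 t) := heron_rot ..
    have w3 : heron (X3 t) (X2 t) (X1 t) = heron (X1 t) (X2 t) (X3 t) := by unfold heron; ring
    have hs := inv_pos.2 (Real.sqrt_pos.2 ht)
    have := mul_neg_of_pos_of_neg hs q
    change d1 * ((√(heron (X1 t) (X3 t) (X2 t)))⁻¹ * _) + d2 * ((√(heron (X2 t) (X1 t) (X3 t)))⁻¹ * _)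
      + d3 * ((√(heron (X3 t) (X2 t) (X1 t)))⁻¹ * _) < 0
    rw [w1, w2, w3]
    refine lt_of_eq_of_lt ?_ this
    ring
  have hcont : Continuous f := by
    have := ang_continuous c1 c3 c2 p3 p2
    have := ang_continuous c2 c1 c3 p1 p3
    have := ang_continuous c3 c2 c1 p2 p1
    fun_prop
  have h01 := strict_of_finite (f := f) (S := {d1 * π, d2 * π, d3 * π}) (by simp) hcont
    (fun t => by
      by_cases ht : 0 < heron (X1 t) (X2 t) (X3 t)
      · exact Or.inr (hder t ht)
      · exact Or.inl (degenerate (p1 t) (p2 t) (p3 t) (not_lt.1 ht) d1 d2 d3))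
    (hder 0 (by simpa [hX1, hX2, hX3] using hH))
  simpa [hf, hX1, hX2, hX3, e1, e2, e3] using h01

/-! ### Faces, Gauss–Bonnet and Chebyshev -/

/-- The squared length of the edge `{i, j}`. -/
noncomputable def lsq (I : Finset (Fin N) → ℝ) (r : Fin N → ℝ) (i j : Fin N) : ℝ :=
  sq (r i) (r j) (I {i, j})

/-- The inner angle at `i` in the triangle `{i, j, k}`. -/
noncomputable def theta (I : Finset (Fin N) → ℝ) (r : Fin N → ℝ) (i j k : Fin N) : ℝ :=
  Real.arccos (cosAng I r i j k)

lemma lsq_comm (I : Finset (Fin N) → ℝ) (r : Fin N → ℝ) (i j : Fin N) :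
    lsq I r i j = lsq I r j i := by
  unfold lsq sq; rw [Finset.pair_comm]; ring

lemma len_eq (I : Finset (Fin N) → ℝ) (r : Fin N → ℝ) (i j : Fin N) :
    len I r i j = √(lsq I r i j) := rfl

lemma theta_eq {I : Finset (Fin N) → ℝ} {r : Fin N → ℝ} {i j k : Fin N}
    (h1 : 0 < lsq I r j k) (h2 : 0 < lsq I r i j) (h3 : 0 < lsq I r i k) :
    theta I r i j k = ang (lsq I r j k) (lsq I r i j) (lsq I r i k) := by
  unfold theta cosAng ang
  rw [len_eq, len_eq, len_eq, Real.sq_sqrt h1.le, Real.sq_sqrt h2.le, Real.sq_sqrt h3.le]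

lemma face_distinct {Fc : Finset (Finset (Fin N))} (hT : IsTriangulation Fc) {i j k : Fin N}
    (h : ({i, j, k} : Finset (Fin N)) ∈ Fc) : i ≠ j ∧ i ≠ k ∧ j ≠ k := by
  have h3 := hT.card3 _ h
  have h2 := fun a b : Fin N => Finset.card_le_two (a := a) (b := b)
  refine ⟨?_, ?_, ?_⟩ <;> rintro rfl
  · have := h2 i k
    simp at h3; omega
  · have := h2 i j
    rw [Finset.pair_comm j i] at h3
    simp at h3; omega
  · have := h2 i j
    simp at h3; omega

lemma edge_of_face {Fc : Finset (Finset (Fin N))} (hT : IsTriangulation Fc) {i j k : Fin N}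
    (h : ({i, j, k} : Finset (Fin N)) ∈ Fc) :
    ({j, k} : Finset (Fin N)) ∈ edges Fc ∧ ({i, k} : Finset (Fin N)) ∈ edges Fc ∧
      ({i, j} : Finset (Fin N)) ∈ edges Fc := by
  obtain ⟨h1, h2, h3⟩ := face_distinct hT h
  simp only [edges, Finset.mem_biUnion, Finset.mem_powersetCard]
  refine ⟨⟨_, h, ?_, Finset.card_pair h3⟩, ⟨_, h, ?_, Finset.card_pair h2⟩,
    ⟨_, h, ?_, Finset.card_pair h1⟩⟩ <;> intro x <;> simp <;> tauto

lemma rot_mem {Fc : Finset (Finset (Fin N))} {i j k : Fin N} :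
    ({j, k, i} : Finset (Fin N)) ∈ Fc ↔ ({i, j, k} : Finset (Fin N)) ∈ Fc := by
  have : ({j, k, i} : Finset (Fin N)) = {i, j, k} := by
    ext x; simp; tauto
  rw [this]

lemma lsq_pos {Fc : Finset (Finset (Fin N))} {I : Finset (Fin N) → ℝ}
    (hI : ∀ e ∈ edges Fc, 0 ≤ I e) {r : Fin N → ℝ} (hr : r ∈ Omega Fc I) {i j : Fin N}
    (h : ({i, j} : Finset (Fin N)) ∈ edges Fc) : 0 < lsq I r i j :=
  sq_pos (hr.1 i) (hr.1 j) (hI _ h)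

/-- The three triangle inequalities in a face, for square roots of squared lengths. -/
lemma face_ineq {Fc : Finset (Finset (Fin N))} {I : Finset (Fin N) → ℝ}
    {r : Fin N → ℝ} (hr : r ∈ Omega Fc I) {i j k : Fin N}
    (h : ({i, j, k} : Finset (Fin N)) ∈ Fc) :
    √(lsq I r j k) < √(lsq I r i k) + √(lsq I r i j) ∧
    √(lsq I r i k) < √(lsq I r i j) + √(lsq I r j k) ∧
    √(lsq I r i j) < √(lsq I r j k) + √(lsq I r i k) := by
  have a := hr.2 i j k h
  have b := hr.2 j k i (rot_mem.2 h)
  have c := hr.2 k i j (rot_mem.2 (rot_mem.2 h))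
  simp only [len_eq] at a b c
  rw [lsq_comm I r k i, lsq_comm I r j i] at b
  rw [lsq_comm I r k i, lsq_comm I r k j] at c
  refine ⟨by linarith, by linarith, by linarith⟩

/-- The angles of a face as opposite angles of its sides. -/
lemma face_theta {Fc : Finset (Finset (Fin N))} (hT : IsTriangulation Fc)
    {I : Finset (Fin N) → ℝ} (hI : ∀ e ∈ edges Fc, 0 ≤ I e)
    {r : Fin N → ℝ} (hr : r ∈ Omega Fc I) {i j k : Fin N}
    (h : ({i, j, k} : Finset (Fin N)) ∈ Fc) :
    theta I r i j k = ang (lsq I r j k) (lsq I r i j) (lsq I r i k) ∧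
    theta I r j k i = ang (lsq I r i k) (lsq I r j k) (lsq I r i j) ∧
    theta I r k i j = ang (lsq I r i j) (lsq I r i k) (lsq I r j k) := by
  obtain ⟨e1, e2, e3⟩ := edge_of_face hT h
  have p1 := lsq_pos hI hr e1
  have p2 := lsq_pos hI hr e2
  have p3 := lsq_pos hI hr e3
  refine ⟨theta_eq p1 p3 p2, ?_, ?_⟩
  · rw [theta_eq] <;> simpa [lsq_comm I r k i, lsq_comm I r j i]
  · rw [theta_eq] <;> simpa [lsq_comm I r k i, lsq_comm I r k j]

lemma face_angle_sum {Fc : Finset (Finset (Fin N))} (hT : IsTriangulation Fc)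
    {I : Finset (Fin N) → ℝ} (hI : ∀ e ∈ edges Fc, 0 ≤ I e)
    {r : Fin N → ℝ} (hr : r ∈ Omega Fc I) {i j k : Fin N}
    (h : ({i, j, k} : Finset (Fin N)) ∈ Fc) :
    theta I r i j k + theta I r j k i + theta I r k i j = π := by
  obtain ⟨e1, e2, e3⟩ := edge_of_face hT h
  obtain ⟨t1, t2, t3⟩ := face_theta hT hI hr h
  obtain ⟨a, b, c⟩ := face_ineq hr h
  rw [t1, t2, t3]
  exact angle_sum (lsq_pos hI hr e1) (lsq_pos hI hr e2) (lsq_pos hI hr e3) a b c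

/-- The weighted change of the angles of a face is negative unless the weights agree. -/
lemma face_strict {Fc : Finset (Finset (Fin N))} (hT : IsTriangulation Fc)
    {I : Finset (Fin N) → ℝ} (hI : ∀ e ∈ edges Fc, 0 ≤ I e)
    {r rh d : Fin N → ℝ} (hr : r ∈ Omega Fc I) (hrh : rh ∈ Omega Fc I)
    (hd : ∀ i, rh i = r i * Real.exp (d i)) {i j k : Fin N}
    (h : ({i, j, k} : Finset (Fin N)) ∈ Fc) (hne : ¬ (d i = d j ∧ d j = d k)) :
    d i * (theta I rh i j k - theta I r i j k) + d j * (theta I rh j k i - theta I r j k i)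
      + d k * (theta I rh k i j - theta I r k i j) < 0 := by
  obtain ⟨e1, e2, e3⟩ := edge_of_face hT h
  obtain ⟨t1, t2, t3⟩ := face_theta hT hI hr h
  obtain ⟨t1', t2', t3'⟩ := face_theta hT hI hrh h
  obtain ⟨a, b, c⟩ := face_ineq hr h
  have hH := heron_pos (lsq_pos hI hr e1) (lsq_pos hI hr e2) (lsq_pos hI hr e3)
    (by linarith) (by linarith) (by linarith)
  have := triangle_strict (hr.1 i) (hr.1 j) (hr.1 k) (hI _ e1) (hI _ e2) (hI _ e3) hH
    (hd i) (hd j) (hd k) hne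
  rw [t1, t2, t3, t1', t2', t3']
  unfold lsq
  linarith

/-- A sum over ordered triples spanning a face may be averaged over cyclic rotations. -/
lemma sum_rot (Fc : Finset (Finset (Fin N))) (g : Fin N → Fin N → Fin N → ℝ) :
    3 * ∑ i, ∑ j, ∑ k, (if ({i, j, k} : Finset (Fin N)) ∈ Fc then g i j k else 0) =
      ∑ i, ∑ j, ∑ k, (if ({i, j, k} : Finset (Fin N)) ∈ Fc then
        g i j k + g j k i + g k i j else 0) := by
  have rot : ∀ f : Fin N → Fin N → Fin N → ℝ,
      ∑ i, ∑ j, ∑ k, f j k i = ∑ i, ∑ j, ∑ k, f i j k := by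
    intro f
    rw [Finset.sum_comm]
    exact Finset.sum_congr rfl fun j _ => Finset.sum_comm
  set f : Fin N → Fin N → Fin N → ℝ :=
    fun i j k => if ({i, j, k} : Finset (Fin N)) ∈ Fc then g i j k else 0 with hf
  have e : ∀ i j k, (if ({i, j, k} : Finset (Fin N)) ∈ Fc then
        g i j k + g j k i + g k i j else 0) = f i j k + f j k i + f k i j := by
    intro i j k
    simp only [hf]
    rw [if_congr (rot_mem (Fc := Fc) (i := i) (j := j) (k := k)) rfl rfl,
      if_congr ((rot_mem (Fc := Fc) (i := j) (j := k) (k := i)).trans rot_mem) rfl rfl]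
    split_ifs <;> simp
  have e2 : ∑ i, ∑ j, ∑ k, f k i j = ∑ i, ∑ j, ∑ k, f i j k := by
    rw [← rot fun i j k => f k i j]
  simp only [e, Finset.sum_add_distrib]
  rw [rot f, e2]
  ring

lemma card_orderings {f : Finset (Fin N)} (hf : f.card = 3) :
    ∑ i, ∑ j, ∑ k, (if ({i, j, k} : Finset (Fin N)) = f then (1 : ℝ) else 0) = 6 := by
  obtain ⟨a, b, c, hab, hac, hbc, rfl⟩ := Finset.card_eq_three.1 hf
  have : (Finset.univ.filter fun p : Fin N × Fin N × Fin N =>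
      ({p.1, p.2.1, p.2.2} : Finset (Fin N)) = {a, b, c})
      = {(a, b, c), (a, c, b), (b, a, c), (b, c, a), (c, a, b), (c, b, a)} := by
    ext ⟨i, j, k⟩
    simp only [Finset.mem_filter, Finset.mem_univ, true_and, Finset.mem_insert,
      Finset.mem_singleton, Prod.mk.injEq]
    constructor
    · intro h
      have hi : i ∈ ({a, b, c} : Finset (Fin N)) := by rw [← h]; simp
      have hj : j ∈ ({a, b, c} : Finset (Fin N)) := by rw [← h]; simp
      have hk : k ∈ ({a, b, c} : Finset (Fin N)) := by rw [← h]; simp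
      have ha : a ∈ ({i, j, k} : Finset (Fin N)) := by rw [h]; simp
      have hb : b ∈ ({i, j, k} : Finset (Fin N)) := by rw [h]; simp
      have hc : c ∈ ({i, j, k} : Finset (Fin N)) := by rw [h]; simp
      simp only [Finset.mem_insert, Finset.mem_singleton] at hi hj hk ha hb hc
      clear h hf
      grind
    · rintro (⟨rfl, rfl, rfl⟩ | ⟨rfl, rfl, rfl⟩ | ⟨rfl, rfl, rfl⟩ | ⟨rfl, rfl, rfl⟩ |
        ⟨rfl, rfl, rfl⟩ | ⟨rfl, rfl, rfl⟩) <;> (ext x; simp; try tauto)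
  have h2 := congrArg Finset.card this
  have h3 : (({(a, b, c), (a, c, b), (b, a, c), (b, c, a), (c, a, b), (c, b, a)} :
      Finset (Fin N × Fin N × Fin N))).card = 6 := by
    simp [Finset.card_insert_of_notMem, hab, hac, hbc, hab.symm, hac.symm, hbc.symm]
  rw [h3] at h2
  have h4 : ∑ p : Fin N × Fin N × Fin N,
      (if ({p.1, p.2.1, p.2.2} : Finset (Fin N)) = {a, b, c} then (1 : ℝ) else 0) = 6 := by
    rw [Finset.sum_boole, h2]; norm_num
  rw [Fintype.sum_prod_type] at h4
  simpa only [Fintype.sum_prod_type] using h4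

lemma card_faces {Fc : Finset (Finset (Fin N))} (hT : IsTriangulation Fc) :
    ∑ i, ∑ j, ∑ k, (if ({i, j, k} : Finset (Fin N)) ∈ Fc then (1 : ℝ) else 0)
      = 6 * (Fc.card : ℝ) := by
  have e : ∀ i j k : Fin N, (if ({i, j, k} : Finset (Fin N)) ∈ Fc then (1 : ℝ) else 0)
      = ∑ f ∈ Fc, if ({i, j, k} : Finset (Fin N)) = f then (1 : ℝ) else 0 := by
    intro i j k; rw [Finset.sum_ite_eq]
  simp only [e]
  have : ∑ i : Fin N, ∑ j : Fin N, ∑ k : Fin N, ∑ f ∈ Fc,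
      (if ({i, j, k} : Finset (Fin N)) = f then (1 : ℝ) else 0)
      = ∑ f ∈ Fc, ∑ i : Fin N, ∑ j : Fin N, ∑ k : Fin N,
        (if ({i, j, k} : Finset (Fin N)) = f then (1 : ℝ) else 0) := by
    rw [Finset.sum_comm (s := Fc)]
    refine Finset.sum_congr rfl fun i _ => ?_
    rw [Finset.sum_comm (s := Fc)]
    refine Finset.sum_congr rfl fun j _ => ?_
    rw [Finset.sum_comm (s := Fc)]
  rw [this, Finset.sum_congr rfl fun f hf => card_orderings (hT.card3 f hf)]
  simp [mul_comm]

lemma two_edges {Fc : Finset (Finset (Fin N))} (hT : IsTriangulation Fc) :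
    Fc.card * 3 = (edges Fc).card * 2 := by
  refine Finset.card_mul_eq_card_mul (fun f e => e ⊆ f) ?_ ?_
  · intro f hf
    have : (edges Fc).bipartiteAbove (fun f e => e ⊆ f) f = f.powersetCard 2 := by
      ext e
      simp only [Finset.mem_bipartiteAbove, edges, Finset.mem_biUnion, Finset.mem_powersetCard]
      constructor
      · rintro ⟨⟨g, _, _, h⟩, h'⟩; exact ⟨h', h⟩
      · rintro ⟨h, h'⟩; exact ⟨⟨f, hf, h, h'⟩, h⟩
    rw [this, Finset.card_powersetCard, hT.card3 f hf]; rfl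
  · intro e he
    exact hT.edge2 e he

lemma gauss_bonnet {Fc : Finset (Finset (Fin N))} (hT : IsTriangulation Fc)
    {I : Finset (Fin N) → ℝ} (hI : ∀ e ∈ edges Fc, 0 ≤ I e)
    {r : Fin N → ℝ} (hr : r ∈ Omega Fc I) : ∑ i, K Fc I r i = 2 * π * (chi Fc : ℝ) := by
  have h1 := sum_rot Fc (theta I r)
  have h2 : ∑ i, ∑ j, ∑ k, (if ({i, j, k} : Finset (Fin N)) ∈ Fc then
        theta I r i j k + theta I r j k i + theta I r k i j else 0) = π * (6 * (Fc.card : ℝ)) := by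
    rw [← card_faces hT]
    simp only [Finset.mul_sum]
    refine Finset.sum_congr rfl fun i _ => Finset.sum_congr rfl fun j _ =>
      Finset.sum_congr rfl fun k _ => ?_
    split_ifs with h
    · rw [face_angle_sum hT hI hr h, mul_one]
    · simp
  have h3 : ∑ i, K Fc I r i = N * (2 * π) - 1 / 2 *
      ∑ i, ∑ j, ∑ k, (if ({i, j, k} : Finset (Fin N)) ∈ Fc then theta I r i j k else 0) := by
    simp [K, theta, Finset.sum_sub_distrib, Finset.mul_sum]
  have h4 : (Fc.card : ℝ) * 3 = (edges Fc).card * 2 := by exact_mod_cast two_edges hT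
  rw [h3, chi]
  push_cast
  rw [h2] at h1
  linear_combination -1 / 6 * h1 - π * h4

/-- Chebyshev's inequality: the mean of `d` with weights `q = p e^{αd}` compares with
its mean with weights `p` according to the sign of `α`. -/
lemma chebyshev {p q d : Fin N → ℝ} {α χ : ℝ} (hp : ∀ i, 0 < p i)
    (hq : ∀ i, q i = p i * Real.exp (α * d i)) (hα : α * χ ≤ 0) :
    χ * ((∑ i, d i * q i) * (∑ i, p i) - (∑ i, d i * p i) * (∑ i, q i)) ≤ 0 := by
  have e : 2 * ((∑ i, d i * q i) * (∑ i, p i) - (∑ i, d i * p i) * (∑ i, q i))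
      = ∑ i, ∑ j, (d i - d j) * (q i * p j - p i * q j) := by
    have : ∀ i j, (d i - d j) * (q i * p j - p i * q j)
        = (d i * q i) * p j - (d i * p i) * q j + p i * (d j * q j) - q i * (d j * p j) := by
      intro i j; ring
    simp only [this, Finset.sum_sub_distrib, Finset.sum_add_distrib, ← Finset.sum_mul_sum]
    ring
  suffices h : χ * (2 * ((∑ i, d i * q i) * (∑ i, p i) - (∑ i, d i * p i) * (∑ i, q i))) ≤ 0 by
    linarith
  rw [e, Finset.mul_sum]
  refine Finset.sum_nonpos fun i _ => ?_
  rw [Finset.mul_sum]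
  refine Finset.sum_nonpos fun j _ => ?_
  rw [hq i, hq j]
  set Z := (d i - d j) * (Real.exp (α * d i) - Real.exp (α * d j)) with hZ
  have hpp : 0 < p i * p j := mul_pos (hp i) (hp j)
  have eZ : χ * ((d i - d j) * (p i * Real.exp (α * d i) * p j - p i * (p j * Real.exp (α * d j))))
      = (p i * p j) * (χ * Z) := by rw [hZ]; ring
  rw [eZ]
  refine mul_nonpos_of_nonneg_of_nonpos hpp.le ?_
  have hαZ : 0 ≤ α * Z := by
    have : α * Z = (α * d i - α * d j) * (Real.exp (α * d i) - Real.exp (α * d j)) := by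
      rw [hZ]; ring
    rw [this]
    rcases le_total (α * d i) (α * d j) with h | h
    · exact mul_nonneg_of_nonpos_of_nonpos (by linarith) (by linarith [Real.exp_le_exp.2 h])
    · exact mul_nonneg (by linarith) (by linarith [Real.exp_le_exp.2 h])
  rcases eq_or_ne α 0 with h0 | h0
  · simp [hZ, h0]
  · have h1 : (α * α) * (χ * Z) ≤ 0 := by
      have := mul_nonpos_of_nonpos_of_nonneg hα hαZ
      linarith
    exact nonpos_of_mul_nonpos_right h1 (mul_self_pos.2 h0)

lemma const_of_faces {Fc : Finset (Finset (Fin N))} (hT : IsTriangulation Fc) {d : Fin N → ℝ}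
    (h : ∀ i j k : Fin N, ({i, j, k} : Finset (Fin N)) ∈ Fc → d i = d j) (i j : Fin N) :
    d i = d j := by
  have hedge : ∀ i j : Fin N, i ≠ j → ({i, j} : Finset (Fin N)) ∈ edges Fc → d i = d j := by
    intro i j hij he
    simp only [edges, Finset.mem_biUnion, Finset.mem_powersetCard] at he
    obtain ⟨f, hf, hsub, _⟩ := he
    have hc := hT.card3 f hf
    obtain ⟨k, hkf, hk⟩ : ∃ k ∈ f, k ∉ ({i, j} : Finset (Fin N)) := by
      refine Finset.exists_mem_notMem_of_card_lt_card ?_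
      rw [hc, Finset.card_pair hij]; norm_num
    simp only [Finset.mem_insert, Finset.mem_singleton, not_or] at hk
    have h3 : ({i, j, k} : Finset (Fin N)).card = 3 :=
      Finset.card_eq_three.2 ⟨i, j, k, hij, Ne.symm hk.1, Ne.symm hk.2, rfl⟩
    have hEq : ({i, j, k} : Finset (Fin N)) = f := by
      refine Finset.eq_of_subset_of_card_le ?_ (by rw [hc, h3])
      intro x hx
      simp only [Finset.mem_insert, Finset.mem_singleton] at hx
      rcases hx with rfl | rfl | rfl
      · exact hsub (by simp)
      · exact hsub (by simp)
      · exact hkf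
    exact h i j k (hEq ▸ hf)
  obtain ⟨w⟩ := hT.conn.preconnected i j
  induction w with
  | nil => rfl
  | cons hadj _ ih =>
    rw [← ih]
    rw [SimpleGraph.fromRel_adj] at hadj
    rcases hadj.2 with he | he
    · exact hedge _ _ hadj.1 he
    · exact (hedge _ _ hadj.1.symm he).symm

/-! ### Rigidity -/

/-- rigidity: if αχ(M) ≤ 0, then constant α-curvature metrics in
Ω are unique up to scaling. -/
theorem stmt8 {N : ℕ} (Fc : Finset (Finset (Fin N))) (hT : IsTriangulation Fc)
    (I : Finset (Fin N) → ℝ) (hI : ∀ e ∈ edges Fc, 0 ≤ I e) (α : ℝ)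
    (hαχ : α * (chi Fc : ℝ) ≤ 0)
    (r rh : Fin N → ℝ) (hr : r ∈ Omega Fc I) (hrh : rh ∈ Omega Fc I)
    (c ch : ℝ)
    (hc : ∀ i : Fin N, K Fc I r i = c * r i ^ α)
    (hch : ∀ i : Fin N, K Fc I rh i = ch * rh i ^ α) :
    ∃ lam : ℝ, 0 < lam ∧ rh = fun i => lam * r i := by
  obtain ⟨i0⟩ := hT.conn.nonempty
  set d : Fin N → ℝ := fun i => Real.log (rh i / r i) with hd
  have hrd : ∀ i, rh i = r i * Real.exp (d i) := by
    intro i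
    have h1 := hr.1 i
    have h2 := hrh.1 i
    rw [hd, Real.exp_log (by positivity)]
    field_simp
  suffices hconst : ∀ i j, d i = d j by
    refine ⟨Real.exp (d i0), Real.exp_pos _, funext fun i => ?_⟩
    rw [hrd i, hconst i i0, mul_comm]
  -- the curvature side: `Σ dᵢ (K̂ᵢ - Kᵢ) ≤ 0`
  have hupper : ∑ i, d i * (K Fc I rh i - K Fc I r i) ≤ 0 := by
    have hp : ∀ i, 0 < r i ^ α := fun i => Real.rpow_pos_of_pos (hr.1 i) α
    have hq : ∀ i, 0 < rh i ^ α := fun i => Real.rpow_pos_of_pos (hrh.1 i) α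
    have hpq : ∀ i, rh i ^ α = r i ^ α * Real.exp (α * d i) := by
      intro i
      rw [hrd i, Real.mul_rpow (hr.1 i).le (Real.exp_pos _).le, ← Real.exp_mul, mul_comm (d i)]
    have hP : 0 < ∑ i, r i ^ α := Finset.sum_pos (fun i _ => hp i) ⟨i0, Finset.mem_univ _⟩
    have hQ : 0 < ∑ i, rh i ^ α := Finset.sum_pos (fun i _ => hq i) ⟨i0, Finset.mem_univ _⟩
    have g1 := gauss_bonnet hT hI hr
    have g2 := gauss_bonnet hT hI hrh
    simp only [hc, ← Finset.mul_sum] at g1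
    simp only [hch, ← Finset.mul_sum] at g2
    have e : ∑ i, d i * (K Fc I rh i - K Fc I r i)
        = ch * (∑ i, d i * rh i ^ α) - c * ∑ i, d i * r i ^ α := by
      rw [Finset.mul_sum, Finset.mul_sum, ← Finset.sum_sub_distrib]
      refine Finset.sum_congr rfl fun i _ => ?_
      rw [hc, hch]; ring
    have cheb := chebyshev (d := d) hp hpq hαχ
    rw [e]
    refine nonpos_of_mul_nonpos_right ?_ (mul_pos hP hQ)
    have : (∑ i, r i ^ α) * (∑ i, rh i ^ α) *
        (ch * (∑ i, d i * rh i ^ α) - c * ∑ i, d i * r i ^ α)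
        = 2 * π * ((chi Fc : ℝ) * ((∑ i, d i * rh i ^ α) * (∑ i, r i ^ α)
          - (∑ i, d i * r i ^ α) * (∑ i, rh i ^ α))) := by
      linear_combination (∑ i, r i ^ α) * (∑ i, d i * rh i ^ α) * g2
        - (∑ i, rh i ^ α) * (∑ i, d i * r i ^ α) * g1
    rw [this]
    exact mul_nonpos_of_nonneg_of_nonpos (by positivity) cheb
  -- the angle side: `Σ dᵢ (K̂ᵢ - Kᵢ)` is minus one sixth of a sum of nonpositive face terms
  set D : Fin N → Fin N → Fin N → ℝ := fun i j k =>
    d i * (theta I rh i j k - theta I r i j k) + d j * (theta I rh j k i - theta I r j k i)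
      + d k * (theta I rh k i j - theta I r k i j) with hD
  have hlower : ∑ i, d i * (K Fc I rh i - K Fc I r i) = -(1 / 6) *
      ∑ i, ∑ j, ∑ k, (if ({i, j, k} : Finset (Fin N)) ∈ Fc then D i j k else 0) := by
    have h1 := sum_rot Fc fun i j k => d i * (theta I rh i j k - theta I r i j k)
    rw [← h1, ← mul_assoc, Finset.mul_sum]
    refine Finset.sum_congr rfl fun i _ => ?_
    have : ∀ s : Fin N → ℝ, K Fc I s i = 2 * π - (1 / 2) * ∑ j, ∑ k,
        (if ({i, j, k} : Finset (Fin N)) ∈ Fc then theta I s i j k else 0) := fun _ => rfl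
    have e2 : ∑ j, ∑ k, (if ({i, j, k} : Finset (Fin N)) ∈ Fc then
          d i * (theta I rh i j k - theta I r i j k) else 0)
        = d i * (∑ j, ∑ k, (if ({i, j, k} : Finset (Fin N)) ∈ Fc then theta I rh i j k else 0)
          - ∑ j, ∑ k, (if ({i, j, k} : Finset (Fin N)) ∈ Fc then theta I r i j k else 0)) := by
      rw [← Finset.sum_sub_distrib, Finset.mul_sum]
      refine Finset.sum_congr rfl fun j _ => ?_
      rw [← Finset.sum_sub_distrib, Finset.mul_sum]
      refine Finset.sum_congr rfl fun k _ => ?_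
      split_ifs <;> simp
    rw [this, this, e2]
    ring
  have hterm : ∀ i j k, (if ({i, j, k} : Finset (Fin N)) ∈ Fc then D i j k else 0) ≤ 0 := by
    intro i j k
    split_ifs with h
    · by_cases hne : d i = d j ∧ d j = d k
      · -- equal weights multiply the change `π - π` of the angle sum
        have s1 := face_angle_sum hT hI hr h
        have s2 := face_angle_sum hT hI hrh h
        refine le_of_eq ?_
        simp only [hD]
        rw [hne.1, hne.2]
        linear_combination d k * (s2 - s1)
      · exact (face_strict hT hI hr hrh hrd h hne).le
    · exact le_rfl
  have hzero : ∑ i, ∑ j, ∑ k, (if ({i, j, k} : Finset (Fin N)) ∈ Fc then D i j k else 0) = 0 := by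
    refine le_antisymm (Finset.sum_nonpos fun i _ => Finset.sum_nonpos fun j _ =>
      Finset.sum_nonpos fun k _ => hterm i j k) ?_
    rw [hlower] at hupper
    linarith
  refine const_of_faces hT fun i j k h => ?_
  have z1 := (Finset.sum_eq_zero_iff_of_nonpos fun i _ => Finset.sum_nonpos fun j _ =>
      Finset.sum_nonpos fun k _ => hterm i j k).1 hzero i (Finset.mem_univ i)
  have z2 := (Finset.sum_eq_zero_iff_of_nonpos fun j _ =>
      Finset.sum_nonpos fun k _ => hterm i j k).1 z1 j (Finset.mem_univ j)
  have z3 := (Finset.sum_eq_zero_iff_of_nonpos fun k _ => hterm i j k).1 z2 k (Finset.mem_univ k)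
  rw [if_pos h] at z3
  by_contra hne
  exact (face_strict hT hI hr hrh hrd h fun hh => hne hh.1).ne z3

end IDCP
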